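/- For every finite simple graph G it holds that tw(G) ≤ pw(G) and pw(G) ≤ (tw(G) + 1)·(log₃(2·|V(G)| + 1) + 1) − 1, where tw(G) is the tree-width and pw(G) is the path-width of G. -/

import Mathlib

open SimpleGraph

/-- `(T, X)` is a tree-decomposition of the graph `G`. -/
def IsTreeDecomp {V ι : Type} (G : SimpleGraph V) (T : SimpleGraph ι)
    (X : ι → Finset V) : Prop :=
  T.IsTree ∧
  (∀ v : V, ∃ u : ι, v ∈ X u) ∧
  (∀ v w : V, G.Adj v w → ∃ u : ι, v ∈ X u ∧ w ∈ X u) ∧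
  (∀ v : V, (T.induce {u : ι | v ∈ X u}).Connected)

/-- The tree-width of `G`: the minimum over all tree-decompositions of
(maximum bag size − 1). -/
noncomputable def treewidth {V : Type} (G : SimpleGraph V) : ℕ :=
  sInf { k | ∃ (ι : Type) (T : SimpleGraph ι) (X : ι → Finset V),
    IsTreeDecomp G T X ∧ sSup (Set.range fun u => (X u).card) - 1 = k }

/-- `X` is a path-decomposition of the graph `G`. -/
def IsPathDecomp {V : Type} {r : ℕ} (G : SimpleGraph V) (X : Fin r → Finset V) : Prop :=
  (∀ v : V, ∃ i, v ∈ X i) ∧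
  (∀ v w : V, G.Adj v w → ∃ i, v ∈ X i ∧ w ∈ X i) ∧
  (∀ i j l : Fin r, i < j → j < l → ∀ x, x ∈ X i → x ∈ X l → x ∈ X j)

/-- The path-width of `G`: the minimum over all path-decompositions of
(maximum bag size − 1). -/
noncomputable def pathwidth {V : Type} (G : SimpleGraph V) : ℕ :=
  sInf { k | ∃ (r : ℕ) (X : Fin r → Finset V),
    IsPathDecomp G X ∧ sSup (Set.range fun i => (X i).card) - 1 = k }

section forestpw

open Classical in
/-- Interval representation of `F[S]` with at most `b` active vertices at any time. -/
def IR {V : Type} (F : SimpleGraph V) (b : ℕ) (S : Finset V) (l r : V → ℤ) : Prop :=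
  (∀ v ∈ S, l v ≤ r v) ∧ (∀ v ∈ S, ∀ w ∈ S, F.Adj v w → l v ≤ r w) ∧
  ∀ t, (S.filter (fun v => l v ≤ t ∧ t ≤ r v)).card ≤ b

def QQ {V : Type} (F : SimpleGraph V) (b : ℕ) (S : Finset V) : Prop := ∃ l r, IR F b S l r

def EE {V : Type} (F : SimpleGraph V) (b : ℕ) (S : Finset V) (u : V) : Prop :=
  ∃ l r, IR F b S l r ∧ u ∈ S ∧ ∀ v ∈ S, v ≠ u → r v < r u

variable {V : Type} {F : SimpleGraph V}

lemma IR.shift {b S l r} (h : IR F b S l r) (c : ℤ) :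
    IR F b S (fun v => l v + c) (fun v => r v + c) := by
  obtain ⟨h1, h2, h3⟩ := h
  refine ⟨fun v hv => by simpa using h1 v hv, fun v hv w hw a => by simpa using h2 v hv w hw a, ?_⟩
  intro t
  refine le_trans (Finset.card_le_card ?_) (h3 (t - c))
  intro v
  simp only [Finset.mem_filter]
  rintro ⟨h, h', h''⟩
  exact ⟨h, by linarith, by linarith⟩

lemma IR.neg {b S l r} (h : IR F b S l r) : IR F b S (fun v => - r v) (fun v => - l v) := by
  obtain ⟨h1, h2, h3⟩ := h
  refine ⟨fun v hv => by simpa using h1 v hv,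
    fun v hv w hw a => by simpa using h2 w hw v hv a.symm, ?_⟩
  intro t
  refine le_trans (Finset.card_le_card ?_) (h3 (- t))
  intro v
  simp only [Finset.mem_filter]
  rintro ⟨h, h', h''⟩
  exact ⟨h, by linarith, by linarith⟩

lemma bdd_exists (S : Finset V) (l : V → ℤ) : ∃ K : ℤ, 0 ≤ K ∧ ∀ v ∈ S, -K < l v ∧ l v < K := by
  refine ⟨∑ v ∈ S, |l v| + 1, ?_, ?_⟩
  · positivity
  · intro v hv
    have := Finset.single_le_sum (f := fun v => |l v|) (fun i _ => abs_nonneg _) hv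
    have h2 := abs_le.1 this
    constructor <;> linarith [h2.1, h2.2]

open Classical in
/-- glue -/
lemma IR.glue {b A C lA rA lC rC} (hA : IR F b A lA rA) (hC : IR F b C lC rC)
    (hd : Disjoint A C)
    (h1 : ∀ x ∈ A, ∀ y ∈ C, F.Adj x y → lA x ≤ rC y ∧ lC y ≤ rA x)
    (h2 : ∀ t, (∀ x ∈ A, ¬ (lA x ≤ t ∧ t ≤ rA x)) ∨ (∀ x ∈ C, ¬ (lC x ≤ t ∧ t ≤ rC x)) ∨
      ((A.filter (fun v => lA v ≤ t ∧ t ≤ rA v)).card +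
        (C.filter (fun v => lC v ≤ t ∧ t ≤ rC v)).card ≤ b)) :
    IR F b (A ∪ C) (fun v => if v ∈ A then lA v else lC v)
      (fun v => if v ∈ A then rA v else rC v) := by
  have hdis : ∀ x ∈ C, x ∉ A := fun x hx hx' => Finset.disjoint_left.1 hd hx' hx
  refine ⟨?_, ?_, ?_⟩
  · intro v hv
    by_cases hvA : v ∈ A
    · simpa [hvA] using hA.1 v hvA
    · have : v ∈ C := by simpa [hvA] using hv
      simpa [hvA] using hC.1 v this
  · intro v hv w hw a
    by_cases hvA : v ∈ A <;> by_cases hwA : w ∈ A <;> simp only [hvA, hwA, if_true, if_false]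
    · exact hA.2.1 v hvA w hwA a
    · exact (h1 v hvA w (by simpa [hwA] using hw) a).1
    · exact (h1 w hwA v (by simpa [hvA] using hv) a.symm).2
    · exact hC.2.1 v (by simpa [hvA] using hv) w (by simpa [hwA] using hw) a
  · intro t
    have hsub : ((A ∪ C).filter (fun v => (if v ∈ A then lA v else lC v) ≤ t ∧
        t ≤ (if v ∈ A then rA v else rC v))) ⊆ (A.filter (fun v => lA v ≤ t ∧ t ≤ rA v)) ∪
        (C.filter (fun v => lC v ≤ t ∧ t ≤ rC v)) := by
      intro v
      simp only [Finset.mem_filter, Finset.mem_union]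
      rintro ⟨hv, hv'⟩
      by_cases hvA : v ∈ A
      · left; simpa [hvA] using hv'
      · right; simp only [hvA, if_false] at hv'; exact ⟨by simpa [hvA] using hv, hv'⟩
    have hle := (Finset.card_le_card hsub).trans (Finset.card_union_le _ _)
    have ha := hA.2.2 t
    have hc := hC.2.2 t
    rcases h2 t with h | h | h
    · have : (A.filter (fun v => lA v ≤ t ∧ t ≤ rA v)) = ∅ := Finset.filter_eq_empty_iff.2 (by simpa using h)
      rw [this, Finset.card_empty, zero_add] at hle
      exact hle.trans hc
    · have : (C.filter (fun v => lC v ≤ t ∧ t ≤ rC v)) = ∅ := Finset.filter_eq_empty_iff.2 (by simpa using h)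
      rw [this, Finset.card_empty, add_zero] at hle
      exact hle.trans ha
    · exact hle.trans h

open Classical in
lemma QQ.union {b A C} (hA : QQ F b A) (hC : QQ F b C) (hd : Disjoint A C)
    (hn : ∀ x ∈ A, ∀ y ∈ C, ¬ F.Adj x y) : QQ F b (A ∪ C) := by
  obtain ⟨lA, rA, hA⟩ := hA
  obtain ⟨lC, rC, hC⟩ := hC
  obtain ⟨K, -, hK⟩ := bdd_exists A rA
  obtain ⟨L, -, hL⟩ := bdd_exists C lC
  refine ⟨_, _, hA.glue (hC.shift (K + L)) hd (fun x hx y hy a => (hn x hx y hy a).elim) ?_⟩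
  intro t
  by_cases ht : t ≤ K
  · right; left
    intro x hx h
    linarith [(hL x hx).1, h.1]
  · left
    intro x hx h
    linarith [(hK x hx).2, h.2]

lemma QQ.empty {b} : QQ F b ∅ := ⟨fun _ => 0, fun _ => 0, by simp [IR]⟩

open Classical in
lemma link {b A C lA rA lC rC a c} (hb : 2 ≤ b) (hA : IR F b A lA rA) (hC : IR F b C lC rC)
    (hd : Disjoint A C) (ha : a ∈ A) (hc : c ∈ C)
    (hra : ∀ v ∈ A, v ≠ a → rA v < rA a) (hlc : ∀ v ∈ C, v ≠ c → lC c < lC v)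
    (hn : ∀ x ∈ A, ∀ y ∈ C, F.Adj x y → x = a ∧ y = c) :
    IR F b (A ∪ C) (fun v => if v ∈ A then lA v + (lC c - rA a) else lC v)
      (fun v => if v ∈ A then rA v + (lC c - rA a) else rC v) := by
  refine (hA.shift (lC c - rA a)).glue hC hd ?_ ?_
  · intro x hx y hy h
    obtain ⟨rfl, rfl⟩ := hn x hx y hy h
    have := hA.1 x hx
    have := hC.1 y hy
    constructor <;> linarith
  · intro t
    have hra' : ∀ v ∈ A, rA v ≤ rA a := fun v hv => by
      by_cases h : v = a
      · rw [h]
      · exact (hra v hv h).le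
    have hlc' : ∀ v ∈ C, lC c ≤ lC v := fun v hv => by
      by_cases h : v = c
      · rw [h]
      · exact (hlc v hv h).le
    rcases lt_trichotomy t (lC c) with ht | ht | ht
    · right; left
      intro x hx h
      linarith [hlc' x hx, h.1]
    · right; right
      refine le_trans (add_le_add (Finset.card_le_card (t := {a}) ?_)
        (Finset.card_le_card (t := {c}) ?_)) (by simpa using hb)
      · intro v
        simp only [Finset.mem_filter, Finset.mem_singleton]
        rintro ⟨hv, h1, h2⟩
        by_contra h
        linarith [hra v hv h]
      · intro v
        simp only [Finset.mem_filter, Finset.mem_singleton]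
        rintro ⟨hv, h1, h2⟩
        by_contra h
        linarith [hlc v hv h]
    · left
      intro x hx h
      linarith [hra' x hx, h.2]

open Classical in
lemma QQ.cone {b R u} (hR : QQ F b R) (hu : u ∉ R) : ∃ l r, IR F (b+1) (insert u R) l r ∧
    (∀ v ∈ R, l u < l v ∧ r v < r u) ∧ l u < r u := by
  obtain ⟨l, r, h⟩ := hR
  obtain ⟨K, hK0, hK⟩ := bdd_exists R l
  obtain ⟨L, hL0, hL⟩ := bdd_exists R r
  have hne : ∀ v ∈ R, v ≠ u := fun v hv h => hu (h ▸ hv)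
  refine ⟨fun v => if v = u then - K else l v, fun v => if v = u then L + 1 else r v,
    ⟨?_, ?_, ?_⟩, ?_, ?_⟩
  · intro v hv
    by_cases hvu : v = u
    · simp [hvu]; linarith
    · simpa [hvu] using h.1 v (by simpa [hvu] using hv)
  · intro v hv w hw a
    by_cases hvu : v = u
    · subst hvu
      have hwv : w ≠ v := a.ne'
      have hw' : w ∈ R := by simpa [hwv] using hw
      simp only [if_true, hwv, if_false]
      linarith [(hK w hw').1, h.1 w hw']
    · have hv' : v ∈ R := by simpa [hvu] using hv
      by_cases hwu : w = u
      · simp only [hvu, hwu, if_true, if_false]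
        linarith [(hL v hv').2, h.1 v hv']
      · have hw' : w ∈ R := by simpa [hwu] using hw
        simpa [hvu, hwu] using h.2.1 v hv' w hw' a
  · intro t
    refine (Finset.card_le_card (t := insert u (R.filter (fun v => l v ≤ t ∧ t ≤ r v))) ?_).trans
      ((Finset.card_insert_le _ _).trans (Nat.succ_le_succ (h.2.2 t)))
    intro v
    simp only [Finset.mem_filter, Finset.mem_insert]
    rintro ⟨hv, hv'⟩
    by_cases hvu : v = u
    · exact Or.inl hvu
    · right
      simpa [hvu] using And.intro (by simpa [hvu] using hv) hv'
  · intro v hv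
    simp only [hne v hv, if_true, if_false]
    exact ⟨(hK v hv).1, by linarith [(hL v hv).2]⟩
  · simp only [if_true]; linarith

/-- Rooted trees built by attaching subtrees. -/
inductive RT (F : SimpleGraph V) : Finset V → V → Prop
  | single (u : V) : RT F {u} u
  | attach (A C S : Finset V) (u c : V) : RT F A u → RT F C c → Disjoint A C →
      (∀ x ∈ A, ∀ y ∈ C, F.Adj x y → x = u ∧ y = c) → (∀ x, x ∈ S ↔ x ∈ A ∨ x ∈ C) → RT F S u

lemma RT.mem {S u} (h : RT F S u) : u ∈ S := by
  induction h with
  | single u => simp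
  | attach A C S u c _ _ _ _ hS ih _ => exact (hS u).2 (Or.inl ih)

open Classical in
def St (F : SimpleGraph V) (b m : ℕ) (S : Finset V) (u : V) : Prop :=
  ∃ A R : Finset V, S = A ∪ insert u R ∧ u ∉ A ∧ u ∉ R ∧ Disjoint A R ∧ QQ F b R ∧
    (∀ x ∈ A, ∀ y ∈ R, ¬ F.Adj x y) ∧
    (A = ∅ ∨ (m + 1 ≤ A.card ∧ ∃ a, EE F (b+1) A a ∧ ∀ x ∈ A, F.Adj x u → x = a))

lemma St.mem {b m S u} (h : St F b m S u) : u ∈ S := by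
  obtain ⟨A, R, rfl, -⟩ := h
  simp

open Classical in
lemma St.toEE {b m S u} (hb : 1 ≤ b) (h : St F b m S u) : EE F (b+1) S u := by
  obtain ⟨A, R, rfl, huA, huR, hd, hQ, hn, hA⟩ := h
  obtain ⟨l, r, hI, hlr, hu⟩ := hQ.cone huR
  rcases hA with rfl | ⟨-, a, ⟨lA, rA, hIA, ha, hra⟩, hau⟩
  · refine ⟨l, r, by simpa using hI, by simp, ?_⟩
    intro v hv hvu
    exact (hlr v (by simpa [hvu] using hv)).2
  · have hd' : Disjoint A (insert u R) := by
      rw [Finset.disjoint_insert_right]; exact ⟨huA, hd⟩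
    refine ⟨_, _, link (by omega) hIA hI hd' ha (c := u) (by simp) hra ?_ ?_, by simp, ?_⟩
    · intro v hv hvu
      exact (hlr v (by simpa [hvu] using hv)).1
    · intro x hx y hy hxy
      by_cases hyu : y = u
      · subst hyu; exact ⟨hau x hx hxy, rfl⟩
      · exact (hn x hx y (by simpa [hyu] using hy) hxy).elim
    · intro v hv hvu
      simp only [huA, if_false]
      by_cases hvA : v ∈ A
      · simp only [hvA, if_true]
        by_cases hva : v = a
        · subst hva; linarith
        · linarith [hra v hvA hva]
      · simp only [hvA, if_false]
        exact (hlr v (by simpa [hvA, hvu] using hv)).2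

open Classical in
lemma St.ext {b m S R' u} (h : St F b m S u) (hR : QQ F b R') (hd' : Disjoint S R')
    (hn' : ∀ x ∈ S, ∀ y ∈ R', F.Adj x y → x = u) : St F b m (S ∪ R') u := by
  have hu := h.mem
  obtain ⟨A, R, rfl, huA, huR, hd, hQ, hn, hA⟩ := h
  have huR' : u ∉ R' := Finset.disjoint_left.1 hd' hu
  simp only [Finset.disjoint_union_left, Finset.disjoint_insert_left] at hd'
  refine ⟨A, R ∪ R', ?_, huA, ?_, ?_, hQ.union hR hd'.2.2 ?_, ?_, hA⟩
  · ext x; simp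
  · simp [huR, huR']
  · simp [hd, hd'.1]
  · intro x hx y hy hxy
    have := hn' x (by simp [hx]) y hy hxy
    exact huR (this ▸ hx)
  · intro x hx y hy hxy
    rcases Finset.mem_union.1 hy with hy | hy
    · exact hn x hx y hy hxy
    · have := hn' x (by simp [hx]) y hy hxy
      exact huA (this ▸ hx)

def Big (F : SimpleGraph V) (b m : ℕ) (S : Finset V) (u : V) : Prop :=
  ∃ (R M C : Finset V) (w c : V), (∀ x, x ∈ S ↔ x ∈ R ∨ x ∈ M ∨ x ∈ C) ∧
    Disjoint R M ∧ Disjoint R C ∧ Disjoint M C ∧ m + 2 ≤ M.card ∧ m + 1 ≤ C.card ∧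
    St F b m M w ∧ EE F (b+1) C c ∧ (∀ x ∈ M, ∀ y ∈ R, F.Adj x y → x = w) ∧
    (∀ x ∈ R, ∀ y ∈ C, ¬ F.Adj x y) ∧ (∀ x ∈ M, ∀ y ∈ C, F.Adj x y → x = w ∧ y = c) ∧
    ((R = ∅ ∧ w = u) ∨ RT F R u)

lemma Big.card {R M C S : Finset V} (h : ∀ x, x ∈ S ↔ x ∈ R ∨ x ∈ M ∨ x ∈ C)
    (h1 : Disjoint R M) (h2 : Disjoint R C) (h3 : Disjoint M C) :
    S.card = R.card + M.card + C.card := by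
  classical
  have : S = (R ∪ M) ∪ C := by ext x; simp [h]
  rw [this, Finset.card_union_of_disjoint (by simp [h2, h3]), Finset.card_union_of_disjoint h1]

lemma Big.toQQ {b m S u} (hb : 1 ≤ b) (ih : ∀ S u, RT F S u → S.card ≤ m → QQ F b S)
    (hS : S.card ≤ 3 * m + 3) (h : Big F b m S u) : QQ F (b+1) S := by
  classical
  obtain ⟨R, M, C, w, c, hm, h1, h2, h3, hM, hC, hSt, hE, hMR, hRC, hMC, hR⟩ := h
  have hcard := Big.card hm h1 h2 h3
  have hQR : QQ F b R := by
    rcases hR with ⟨rfl, -⟩ | hR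
    · exact QQ.empty
    · exact ih _ _ hR (by omega)
  obtain ⟨lA, rA, hIA, hwA, hra⟩ := (hSt.ext hQR h1.symm hMR).toEE hb
  obtain ⟨lC, rC, hIC, hcC, hrc⟩ := hE
  have := link (by omega) hIA hIC.neg (by simp [h2, h3]) hwA hcC hra
    (by intro v hv hvc; simpa using hrc v hv hvc) (by
      intro x hx y hy hxy
      rcases Finset.mem_union.1 hx with hx | hx
      · exact hMC x hx y hy hxy
      · exact (hRC x hx y hy hxy).elim)
  have hS : S = (M ∪ R) ∪ C := by ext x; simp [hm]; tauto
  rw [hS]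
  exact ⟨_, _, this⟩

set_option maxHeartbeats 2000000 in
lemma step {b m} (hb : 1 ≤ b) (ih : ∀ S u, RT F S u → S.card ≤ m → QQ F b S) {S u}
    (h : RT F S u) : S.card ≤ 3 * m + 3 → St F b m S u ∨ Big F b m S u := by
  classical
  induction h with
  | single u =>
    intro _
    left
    exact ⟨∅, ∅, by simp, by simp, by simp, by simp, QQ.empty, by simp, Or.inl rfl⟩
  | attach A C S u c hA hC hd hn hS ihA ihC =>
    intro hcard
    have hSeq : S = A ∪ C := by ext x; simp [hS]
    rw [hSeq, Finset.card_union_of_disjoint hd] at hcard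
    have hdl := Finset.disjoint_left.1 hd
    have hu := hA.mem
    have hc := hC.mem
    rcases ihC (by omega) with hC' | hC'
    · rcases ihA (by omega) with hA' | hA'
      · by_cases hCm : C.card ≤ m
        · left
          rw [hSeq]
          exact hA'.ext (ih _ _ hC hCm) hd (fun x hx y hy hxy => (hn x hx y hy hxy).1)
        · have hE := hC'.toEE hb
          obtain ⟨A', R, hAeq, huA, huR, hd', hQ, hn', rfl | ⟨hA1, a, hA2, hA3⟩⟩ := id hA'
          · left
            simp only [Finset.empty_union] at hAeq
            refine ⟨C, R, ?_, hdl hu, huR, ?_, hQ, ?_, Or.inr ⟨by omega, c, hE, ?_⟩⟩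
            · rw [hSeq, hAeq, Finset.union_comm]
            · rw [hAeq, Finset.disjoint_insert_left] at hd
              exact hd.2.symm
            · intro x hx y hy hxy
              have := (hn y (by simp [hAeq, hy]) x hx hxy.symm).1
              exact huR (this ▸ hy)
            · intro x hx hxu
              exact (hn u hu x hx hxu.symm).2
          · right
            refine ⟨∅, A, C, u, c, by simpa using hS, by simp, by simp, hd, ?_, by omega, hA', hE,
              by simp, by simp, hn, Or.inl ⟨rfl, rfl⟩⟩
            rw [hAeq, Finset.card_union_of_disjoint (by simp [huA, hd']),
              Finset.card_insert_of_notMem huR]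
            omega
      · right
        obtain ⟨R, M, C', w, c', hm, h1, h2, h3, hM, hC2, hSt, hE, hMR, hRC, hMC, hR⟩ := hA'
        have hcard' := Big.card hm h1 h2 h3
        have hCR : ∀ x ∈ R, x ∉ C := fun x hx => hdl ((hm x).2 (Or.inl hx))
        have hCM : ∀ x ∈ M, x ∉ C := fun x hx => hdl ((hm x).2 (Or.inr (Or.inl hx)))
        have hCC : ∀ x ∈ C', x ∉ C := fun x hx => hdl ((hm x).2 (Or.inr (Or.inr hx)))
        have hdRC := Finset.disjoint_left.2 hCR
        have hdMC := Finset.disjoint_left.2 hCM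
        have hdCC := Finset.disjoint_left.2 hCC
        rcases hR with ⟨rfl, rfl⟩ | hR
        · have hwM := hSt.mem
          refine ⟨∅, M ∪ C, C', w, c', ?_, by simp, by simp, ?_, ?_, hC2,
            hSt.ext (ih _ _ hC (by omega)) hdMC ?_, hE, by simp, by simp, ?_, Or.inl ⟨rfl, rfl⟩⟩
          · intro x; simp [hS, hm]; tauto
          · simp [h3, hdCC.symm]
          · exact hM.trans (Finset.card_le_card Finset.subset_union_left)
          · intro x hx y hy hxy
            exact (hn x ((hm x).2 (Or.inr (Or.inl hx))) y hy hxy).1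
          · intro x hx y hy hxy
            rcases Finset.mem_union.1 hx with hx | hx
            · exact hMC x hx y hy hxy
            · have := (hn y ((hm y).2 (Or.inr (Or.inr hy))) x hx hxy.symm).1
              exact (Finset.disjoint_left.1 h3 hwM (this ▸ hy)).elim
        · have huR := hR.mem
          refine ⟨R ∪ C, M, C', w, c', ?_, ?_, ?_, h3, hM, hC2, hSt, hE, ?_, ?_, hMC,
            Or.inr (RT.attach R C _ u c hR hC hdRC ?_ (by simp))⟩
          · intro x; simp [hS, hm]; tauto
          · simp [h1, hdMC.symm]
          · simp [h2, hdCC.symm]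
          · intro x hx y hy hxy
            rcases Finset.mem_union.1 hy with hy | hy
            · exact hMR x hx y hy hxy
            · have := (hn x ((hm x).2 (Or.inr (Or.inl hx))) y hy hxy).1
              exact (Finset.disjoint_left.1 h1 huR (this ▸ hx)).elim
          · intro x hx y hy hxy
            rcases Finset.mem_union.1 hx with hx | hx
            · exact hRC x hx y hy hxy
            · have := (hn y ((hm y).2 (Or.inr (Or.inr hy))) x hx hxy.symm).1
              exact (Finset.disjoint_left.1 h2 huR (this ▸ hy)).elim
          · intro x hx y hy hxy
            exact hn x ((hm x).2 (Or.inl hx)) y hy hxy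
    · right
      obtain ⟨R, M, C', w, c', hm, h1, h2, h3, hM, hC2, hSt, hE, hMR, hRC, hMC, hR⟩ := hC'
      have hAM : ∀ x ∈ A, x ∉ M := fun x hx h => hdl hx ((hm x).2 (Or.inr (Or.inl h)))
      have hAC : ∀ x ∈ A, x ∉ C' := fun x hx h => hdl hx ((hm x).2 (Or.inr (Or.inr h)))
      have hAR : ∀ x ∈ A, x ∉ R := fun x hx h => hdl hx ((hm x).2 (Or.inl h))
      have hdAM := Finset.disjoint_left.2 hAM
      have hdAC := Finset.disjoint_left.2 hAC
      have hdAR := Finset.disjoint_left.2 hAR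
      rcases hR with ⟨rfl, rfl⟩ | hR
      · have hwM := hSt.mem
        refine ⟨A, M, C', w, c', ?_, hdAM, hdAC, h3, hM, hC2, hSt, hE, ?_, ?_, hMC, Or.inr hA⟩
        · intro x; simp [hS, hm]
        · intro x hx y hy hxy
          exact (hn y hy x ((hm x).2 (Or.inr (Or.inl hx))) hxy.symm).2
        · intro x hx y hy hxy
          have := (hn x hx y ((hm y).2 (Or.inr (Or.inr hy))) hxy).2
          exact (Finset.disjoint_left.1 h3 hwM (this ▸ hy)).elim
      · have hcR := hR.mem
        refine ⟨A ∪ R, M, C', w, c', ?_, ?_, ?_, h3, hM, hC2, hSt, hE, ?_, ?_, hMC,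
          Or.inr (RT.attach A R _ u c hA hR hdAR ?_ (by simp))⟩
        · intro x; simp [hS, hm]; tauto
        · simp [h1, hdAM]
        · simp [h2, hdAC]
        · intro x hx y hy hxy
          rcases Finset.mem_union.1 hy with hy | hy
          · have := (hn y hy x ((hm x).2 (Or.inr (Or.inl hx))) hxy.symm).2
            exact (Finset.disjoint_left.1 h1 hcR (this ▸ hx)).elim
          · exact hMR x hx y hy hxy
        · intro x hx y hy hxy
          rcases Finset.mem_union.1 hx with hx | hx
          · have := (hn x hx y ((hm y).2 (Or.inr (Or.inr hy))) hxy).2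
            exact (Finset.disjoint_left.1 h2 hcR (this ▸ hy)).elim
          · exact hRC x hx y hy hxy
        · intro x hx y hy hxy
          exact hn x hx y ((hm y).2 (Or.inl hy)) hxy

lemma forest_pw (s : ℕ) : ∀ S u, RT F S u → 2 * S.card + 1 < 3 ^ (s + 1) → QQ F (s+1) S := by
  have key : ∀ s : ℕ, ∃ m, 2 * m + 3 = 3 ^ (s+1) ∧
      ∀ S u, RT F S u → S.card ≤ m → QQ F (s+1) S := by
    intro s
    induction s with
    | zero =>
      refine ⟨0, by norm_num, ?_⟩
      intro S u h hS
      have := h.mem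
      simp only [nonpos_iff_eq_zero, Finset.card_eq_zero] at hS
      simp [hS] at this
    | succ s ih =>
      obtain ⟨m, hm, ih⟩ := ih
      refine ⟨3 * m + 3, by rw [pow_succ 3 (s+1), ← hm]; ring, ?_⟩
      intro S u h hS
      rcases step (by omega) ih h hS with h | h
      · obtain ⟨l, r, h, -⟩ := h.toEE (by omega)
        exact ⟨l, r, h⟩
      · exact h.toQQ (by omega) ih hS
  obtain ⟨m, hm, h⟩ := key s
  intro S u hS hc
  exact h S u hS (by omega)

end forestpw
lemma pathGraph_isTree (n : ℕ) : (pathGraph (n + 1)).IsTree := by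
  refine ⟨pathGraph_connected n, ?_⟩
  rw [isAcyclic_iff_forall_adj_isBridge]
  have key : ∀ v w : Fin (n+1), (v : ℕ) + 1 = w →
      ¬ ((pathGraph (n+1)).deleteEdges {s(v, w)}).Reachable v w := by
    rintro v w hvw ⟨p⟩
    have : ∀ x y : Fin (n+1), ∀ p : ((pathGraph (n+1)).deleteEdges {s(v, w)}).Walk x y,
        x ≤ v → y ≤ v := by
      intro x y p
      induction p with
      | nil => exact id
      | @cons a b c h p ih =>
        intro hx
        apply ih
        rw [deleteEdges_adj, pathGraph_adj] at h
        by_contra hb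
        have h1 : a = v := Fin.ext (by have := Fin.le_def.1 hx; rw [Fin.le_def] at hb; omega)
        have h2 : b = w := Fin.ext (by have := Fin.le_def.1 hx; rw [Fin.le_def] at hb; omega)
        exact h.2 (by simp [h1, h2])
    have := Fin.le_def.1 (this v w p le_rfl)
    omega
  intro v w h
  rw [isBridge_iff]
  rcases pathGraph_adj.1 h with h | h
  · exact key v w h
  · intro hr
    rw [Sym2.eq_swap] at hr
    exact key w v h hr.symm

lemma IsPathDecomp.toTree {V : Type} {n : ℕ} {G : SimpleGraph V} {X : Fin (n+1) → Finset V}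
    (h : IsPathDecomp G X) : IsTreeDecomp G (pathGraph (n+1)) X := by
  obtain ⟨h1, h2, h3⟩ := h
  refine ⟨pathGraph_isTree n, h1, h2, ?_⟩
  intro v
  obtain ⟨i0, hi0⟩ := h1 v
  have : Nonempty {u : Fin (n+1) | v ∈ X u} := ⟨⟨i0, hi0⟩⟩
  have key : ∀ d : ℕ, ∀ a b : {u : Fin (n+1) | v ∈ X u}, (a.1 : ℕ) + d = b.1 →
      ((pathGraph (n+1)).induce {u | v ∈ X u}).Reachable a b := by
    intro d
    induction d with
    | zero =>
      intro a b hab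
      have : a = b := Subtype.ext (Fin.ext (by omega))
      rw [this]
    | succ d ih =>
      intro a b hab
      have hb := b.1.2
      let c : Fin (n+1) := ⟨a.1 + 1, by omega⟩
      have hc : v ∈ X c := by
        by_cases hd : d = 0
        · have : c = b.1 := Fin.ext (by simp [c]; omega)
          rw [this]; exact b.2
        · exact h3 a.1 c b.1 (Fin.lt_def.2 (by simp [c])) (Fin.lt_def.2 (by simp [c]; omega)) v a.2 b.2
      have hadj : ((pathGraph (n+1)).induce {u | v ∈ X u}).Adj a ⟨c, hc⟩ := by
        rw [comap_adj]
        exact pathGraph_adj.2 (Or.inl (by simp [c]))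
      exact hadj.reachable.trans (ih ⟨c, hc⟩ b (by simp [c]; omega))
  refine ⟨fun a b => ?_⟩
  rcases le_total (a.1 : ℕ) b.1 with hab | hab
  · exact key (b.1 - a.1) a b (by omega)
  · exact (key (a.1 - b.1) b a (by omega)).symm

section toptree
variable {ι : Type} {T : SimpleGraph ι}

lemma parent_unique (hT : T.IsTree) (r : ι) {a b c : ι} (ha : T.Adj a b) (hc : T.Adj c b)
    (hda : T.dist r b = T.dist r a + 1) (hdc : T.dist r b = T.dist r c + 1) : a = c := by
  obtain ⟨p, hp, hpl⟩ := (hT.connected r b).exists_path_of_dist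
  have key : ∀ x, T.Adj x b → T.dist r b = T.dist r x + 1 → x = p.penultimate := by
    intro x hx hd
    obtain ⟨q, hq, hql⟩ := (hT.connected r x).exists_path_of_dist
    apply hT.isAcyclic.eq_penultimate_of_adj_end hp hx.symm
    by_contra hn
    have hb := hT.isAcyclic.mem_support_of_ne_mem_support_of_adj_of_isPath hq hp hx hn
    classical
    have := dist_le (q.takeUntil b hb)
    have := q.length_takeUntil_le_length hb
    omega
  rw [key a ha hda, key c hc hdc]

lemma path_down (hT : T.IsTree) (r : ι) {b t : ι} (p : T.Walk b t) : p.IsPath →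
    ∀ a, T.Adj a b → a ∉ p.support → T.dist r b = T.dist r a + 1 → T.dist r a < T.dist r t := by
  induction p with
  | nil => intro _ a _ _ h; omega
  | @cons b c t h p ih =>
    intro hp a hab ha hd
    rw [Walk.cons_isPath_iff] at hp
    have hca : c ≠ a := fun e => ha (by simp [← e])
    have : T.dist r c = T.dist r b + 1 := by
      rcases hT.dist_eq_dist_add_one_of_adj r h with h' | h'
      · exact (hca (parent_unique hT r h.symm hab h' hd)).elim
      · exact h'
    have := ih hp.1 b h hp.2 this
    omega

/-- In a connected vertex set, a vertex different from `t`, not shallower than `t`,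
has its parent in the set. -/
lemma up_mem (hT : T.IsTree) (r : ι) {s : Set ι} (hs : (T.induce s).Connected) {u t : ι}
    (hu : u ∈ s) (ht : t ∈ s) (hne : u ≠ t) (hd : T.dist r t ≤ T.dist r u) :
    ∃ q ∈ s, T.Adj q u ∧ T.dist r u = T.dist r q + 1 := by
  obtain ⟨p, hp⟩ := (hs.preconnected ⟨u, hu⟩ ⟨t, ht⟩).exists_isPath
  have hp' : (p.map (Embedding.induce s).toHom).IsPath :=
    Walk.IsPath.map Subtype.val_injective hp
  cases p with
  | nil => exact (hne rfl).elim
  | @cons _ c _ h p =>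
    have hadj : T.Adj u c.1 := h
    refine ⟨c.1, c.2, hadj.symm, ?_⟩
    rcases hT.dist_eq_dist_add_one_of_adj r hadj with h' | h'
    · exact h'
    · rw [Walk.map_cons, Walk.cons_isPath_iff] at hp'
      have := path_down hT r _ hp'.1 u hadj hp'.2 h'
      have h2 : T.dist r u < T.dist r t := this
      omega

lemma top_mem (hT : T.IsTree) (r : ι) {s s' : Set ι} (hs : (T.induce s).Connected)
    (hs' : (T.induce s').Connected) {t t' : ι} (ht : t ∈ s) (ht' : t' ∈ s')
    (hmin' : ∀ u ∈ s', T.dist r t' ≤ T.dist r u)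
    (hle : T.dist r t ≤ T.dist r t') : ∀ n u, T.dist r u = n → u ∈ s → u ∈ s' → t' ∈ s := by
  intro n
  induction n with
  | zero =>
    intro u hn hu hu'
    by_cases hut : u = t'
    · exact hut ▸ hu
    · obtain ⟨q, _, _, h⟩ := up_mem hT r hs' hu' ht' hut (hmin' u hu')
      omega
  | succ n ih =>
    intro u hn hu hu'
    by_cases hut : u = t'
    · exact hut ▸ hu
    · obtain ⟨q', hq', hqa', hqd'⟩ := up_mem hT r hs' hu' ht' hut (hmin' u hu')
      have h1 := hmin' q' hq'
      obtain ⟨q, hq, hqa, hqd⟩ := up_mem hT r hs hu ht (by rintro rfl; omega) (by omega)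
      have : q = q' := parent_unique hT r hqa hqa' hqd hqd'
      subst this
      exact ih q (by omega) hq hq'

end toptree

lemma elim_structure {V : Type} [Fintype V] {ι : Type} {G : SimpleGraph V} {T : SimpleGraph ι}
    {X : ι → Finset V} (h : IsTreeDecomp G T X) (k : ℕ) (hk : ∀ u, (X u).card ≤ k) :
    ∃ (ord : V → ℕ) (B : V → Finset V), Function.Injective ord ∧ (∀ v, v ∈ B v) ∧
      (∀ v, ∀ x ∈ B v, ord x ≤ ord v) ∧ (∀ v, (B v).card ≤ k) ∧
      (∀ v w, G.Adj v w → ord v ≤ ord w → v ∈ B w) ∧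
      (∀ v, ∀ x ∈ B v, ∀ p ∈ B v, ord x ≤ ord p → x ∈ B p) := by
  classical
  obtain ⟨hT, h1, h2, h3⟩ := h
  obtain ⟨r⟩ := hT.connected.nonempty
  have htop : ∀ v, ∃ t, v ∈ X t ∧ ∀ u, v ∈ X u → T.dist r t ≤ T.dist r u := by
    intro v
    have hne : {n | ∃ u, v ∈ X u ∧ T.dist r u = n}.Nonempty := by
      obtain ⟨u, hu⟩ := h1 v
      exact ⟨_, u, hu, rfl⟩
    obtain ⟨t, ht, htd⟩ := Nat.sInf_mem hne
    refine ⟨t, ht, fun u hu => ?_⟩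
    rw [htd]
    exact Nat.sInf_le ⟨u, hu, rfl⟩
  choose top htop1 htop2 using htop
  let e := Fintype.equivFin V
  let N := Fintype.card V
  let ord : V → ℕ := fun v => T.dist r (top v) * N + e v
  have hord : ∀ v w, ord v ≤ ord w → T.dist r (top v) ≤ T.dist r (top w) := by
    intro v w hvw
    by_contra hlt
    push Not at hlt
    have h1 := (e w).2
    have h2 : (T.dist r (top w) + 1) * N ≤ T.dist r (top v) * N := Nat.mul_le_mul_right _ hlt
    simp only [ord] at hvw
    have : (e w : ℕ) < N := h1
    rw [add_mul] at h2
    omega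
  have hinj : Function.Injective ord := by
    intro v w hvw
    have h1 := hord v w hvw.le
    have h2 := hord w v hvw.ge
    have h3 : T.dist r (top v) = T.dist r (top w) := le_antisymm h1 h2
    simp only [ord, h3] at hvw
    exact e.injective (Fin.ext (by omega))
  have key : ∀ v w u, ord v ≤ ord w → v ∈ X u → w ∈ X u → v ∈ X (top w) := by
    intro v w u hvw hv hw
    exact top_mem hT r (s := {u | v ∈ X u}) (s' := {u | w ∈ X u}) (h3 v) (h3 w) (htop1 v)
      (htop1 w) (htop2 w) (hord v w hvw) _ u rfl hv hw
  refine ⟨ord, fun v => (X (top v)).filter (fun x => ord x ≤ ord v), hinj, ?_, ?_, ?_, ?_, ?_⟩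
  · intro v; simp [htop1]
  · intro v x hx; exact (Finset.mem_filter.1 hx).2
  · intro v; exact (Finset.card_filter_le _ _).trans (hk _)
  · intro v w hvw hle
    obtain ⟨u, hu, hu'⟩ := h2 v w hvw
    exact Finset.mem_filter.2 ⟨key v w u hle hu hu', hle⟩
  · intro v x hx p hp hle
    exact Finset.mem_filter.2
      ⟨key x p _ hle (Finset.mem_filter.1 hx).1 (Finset.mem_filter.1 hp).1, hle⟩

/-- parent function -/
lemma par_exists {V : Type} [Fintype V] [Nonempty V] {ord : V → ℕ} {B : V → Finset V}
    (hinj : Function.Injective ord) (hle : ∀ v, ∀ x ∈ B v, ord x ≤ ord v)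
    (hB : ∀ v, ∀ x ∈ B v, ∀ p ∈ B v, ord x ≤ ord p → x ∈ B p) :
    ∃ (ρ : V) (par : V → V), (∀ v, ord ρ ≤ ord v) ∧ (∀ v, v ≠ ρ → ord (par v) < ord v) ∧
      (∀ v, v ≠ ρ → ∀ x ∈ B v, x ≠ v → x ∈ B (par v)) := by
  classical
  obtain ⟨ρ, -, hρ⟩ := Finset.exists_min_image Finset.univ ord Finset.univ_nonempty
  have : ∀ v, ∃ p, v ≠ ρ → (ord p < ord v ∧ ∀ x ∈ B v, x ≠ v → x ∈ B p) := by
    intro v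
    by_cases hv : v = ρ
    · exact ⟨v, fun h => (h hv).elim⟩
    by_cases hne : ((B v).erase v).Nonempty
    · obtain ⟨p, hp, hmax⟩ := Finset.exists_max_image _ ord hne
      rw [Finset.mem_erase] at hp
      refine ⟨p, fun _ => ⟨lt_of_le_of_ne (hle v p hp.2) (fun e => hp.1 (hinj e)), ?_⟩⟩
      intro x hx hxv
      exact hB v x hx p hp.2 (hmax x (Finset.mem_erase.2 ⟨hxv, hx⟩))
    · refine ⟨ρ, fun _ => ⟨lt_of_le_of_ne (hρ v (Finset.mem_univ _)) (fun e => hv (hinj e).symm), ?_⟩⟩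
      intro x hx hxv
      exact (hne ⟨x, Finset.mem_erase.2 ⟨hxv, hx⟩⟩).elim
  choose par hpar using this
  exact ⟨ρ, par, fun v => hρ v (Finset.mem_univ _), fun v hv => (hpar v hv).1,
    fun v hv => (hpar v hv).2⟩

lemma RT_univ {V : Type} [Fintype V] {F : SimpleGraph V} {ord : V → ℕ} {ρ : V} {par : V → V}
    (hinj : Function.Injective ord) (hρ : ∀ v, ord ρ ≤ ord v)
    (hpar : ∀ v, v ≠ ρ → ord (par v) < ord v)
    (hF : ∀ x y, F.Adj x y → (x ≠ ρ ∧ y = par x) ∨ (y ≠ ρ ∧ x = par y)) :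
    RT F Finset.univ ρ := by
  classical
  obtain ⟨N, hN⟩ : ∃ N, ∀ v, ord v < N :=
    ⟨∑ v, ord v + 1, fun v => Nat.lt_succ_of_le
      (Finset.single_le_sum (fun _ _ => Nat.zero_le _) (Finset.mem_univ v))⟩
  have key : ∀ d j, ord ρ < j → j + d = N → ∃ f : V → V, (∀ w, ord (f w) < j) ∧
      (∀ w, ord w < j → f w = w) ∧ (∀ w, j ≤ ord w → f w = f (par w)) ∧
      ∀ v, ord v < j → RT F (Finset.univ.filter (fun w => f w = v)) v := by
    intro d
    induction d with
    | zero =>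
      intro j hj hjN
      have hjN : j = N := by omega
      subst hjN
      refine ⟨id, hN, fun _ _ => rfl, fun w hw => ?_, fun v _ => ?_⟩
      · exact absurd (hN w) (by omega)
      · have : Finset.univ.filter (fun w => id w = v) = {v} := by ext; simp
        rw [this]; exact RT.single v
    | succ d ih =>
      intro j hj hjN
      obtain ⟨f, h1, h2, h3, h4⟩ := ih (j+1) (by omega) (by omega)
      by_cases hex : ∃ v0, ord v0 = j
      · obtain ⟨v0, hv0⟩ := hex
        have hv0ρ : v0 ≠ ρ := by rintro rfl; omega
        have hp := hpar v0 hv0ρ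
        have hpne : par v0 ≠ v0 := fun e => by rw [e] at hp; omega
        have hfp : f (par v0) = par v0 := h2 _ (by omega)
        have hfv : f v0 = v0 := h2 _ (by omega)
        refine ⟨fun w => if f w = v0 then par v0 else f w, ?_, ?_, ?_, ?_⟩
        · intro w
          by_cases hw : f w = v0
          · simp only [hw, if_true]; omega
          · simp only [hw, if_false]
            have := h1 w
            have : ord (f w) ≠ j := fun e => hw (hinj (e.trans hv0.symm))
            omega
        · intro w hw
          have hfw := h2 w (by omega)
          have : w ≠ v0 := by rintro rfl; omega
          simp [hfw, this]
        · intro w hw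
          by_cases hwj : ord w = j
          · have : w = v0 := hinj (hwj.trans hv0.symm)
            subst this
            simp [hfv, hfp]
          · have := h3 w (by omega)
            simp only [this]
        · intro v hv
          have hvv0 : v ≠ v0 := by rintro rfl; omega
          by_cases hvp : v = par v0
          · subst hvp
            refine RT.attach _ _ _ _ v0 (h4 (par v0) (by omega)) (h4 v0 (by omega)) ?_ ?_ ?_
            · rw [Finset.disjoint_left]
              intro x hx hx'
              simp only [Finset.mem_filter, Finset.mem_univ, true_and] at hx hx'
              exact hpne (hx.symm.trans hx')
            · intro x hx y hy hxy
              simp only [Finset.mem_filter, Finset.mem_univ, true_and] at hx hy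
              rcases hF x y hxy with ⟨hxρ, hyx⟩ | ⟨hyρ, hxy'⟩
              · exfalso
                by_cases hxj : j + 1 ≤ ord x
                · have := h3 x hxj
                  rw [← hyx, hx, hy] at this
                  exact hpne this
                · have hxx := h2 x (by omega)
                  have := hpar x hxρ
                  rw [← hyx] at this
                  have hyy := h2 y (by omega)
                  have e1 : x = par v0 := hxx.symm.trans hx
                  have e2 : y = v0 := hyy.symm.trans hy
                  subst e1
                  subst e2
                  omega
              · by_cases hyj : j + 1 ≤ ord y
                · have := h3 y hyj
                  rw [← hxy', hx, hy] at this
                  exact (hpne this.symm).elim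
                · have hyy := h2 y (by omega)
                  have e2 : y = v0 := hyy.symm.trans hy
                  subst e2
                  exact ⟨hxy', rfl⟩
            · intro x
              simp only [Finset.mem_filter, Finset.mem_univ, true_and]
              by_cases hx : f x = v0
              · simp [hx]
              · simp [hx]
          · have : Finset.univ.filter (fun w => (if f w = v0 then par v0 else f w) = v) =
                Finset.univ.filter (fun w => f w = v) := by
              ext w
              simp only [Finset.mem_filter, Finset.mem_univ, true_and]
              by_cases hw : f w = v0
              · simp [hw, Ne.symm hvp, Ne.symm hvv0]
              · simp [hw]
            rw [this]
            exact h4 v (by omega)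
      · push Not at hex
        refine ⟨f, fun w => ?_, fun w hw => h2 w (by omega), fun w hw => h3 w ?_,
          fun v hv => h4 v (by omega)⟩
        · have := h1 w
          have := hex (f w)
          omega
        · have := hex w
          omega
  obtain ⟨f, h1, -, -, h4⟩ := key (N - (ord ρ + 1)) (ord ρ + 1) (by omega)
    (by have := hN ρ; omega)
  have hf : ∀ w, f w = ρ := fun w => hinj (le_antisymm (Nat.lt_succ_iff.1 (h1 w)) (hρ _))
  have := h4 ρ (by omega)
  simpa [hf] using this

lemma pathDecomp_exists {V : Type} [Fintype V] [Nonempty V] {ι : Type} {G : SimpleGraph V}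
    {T : SimpleGraph ι} {X : ι → Finset V} (h : IsTreeDecomp G T X) (k s : ℕ)
    (hk : ∀ u, (X u).card ≤ k) (hs : 2 * Fintype.card V + 1 < 3 ^ (s + 1)) :
    ∃ (n : ℕ) (Z : Fin n → Finset V), IsPathDecomp G Z ∧ ∀ i, (Z i).card ≤ (s + 1) * k := by
  classical
  obtain ⟨ord, B, hinj, hself, hle, hcard, hG, hB⟩ := elim_structure h k hk
  obtain ⟨ρ, par, hρ, hpar, hBpar⟩ := par_exists hinj hle hB
  let F : SimpleGraph V := SimpleGraph.fromRel (fun v w => v ≠ ρ ∧ w = par v)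
  have hRT : RT F Finset.univ ρ :=
    RT_univ hinj hρ hpar (fun x y hxy => ((SimpleGraph.fromRel_adj _ _ _).1 hxy).2)
  have hFadj : ∀ v, v ≠ ρ → F.Adj v (par v) := by
    intro v hv
    refine (SimpleGraph.fromRel_adj _ _ _).2 ⟨?_, Or.inl ⟨hv, rfl⟩⟩
    intro e
    have := hpar v hv
    rw [← e] at this
    omega
  obtain ⟨l, r, hI1, hI2, hI3⟩ := forest_pw s _ _ hRT hs
  obtain ⟨K, hK0, hK⟩ := bdd_exists Finset.univ l
  let act : ℤ → Finset V := fun t => Finset.univ.filter (fun v => l v ≤ t ∧ t ≤ r v)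
  have hact : ∀ t v, v ∈ act t ↔ l v ≤ t ∧ t ≤ r v := by intro t v; simp [act]
  have htime : ∀ v, ∃ i : Fin (2 * K.toNat + 1), ((i : ℕ) : ℤ) - K = l v := by
    intro v
    have := hK v (Finset.mem_univ _)
    exact ⟨⟨(l v + K).toNat, by omega⟩, by simp; omega⟩
  refine ⟨2 * K.toNat + 1, fun i => (act ((i : ℕ) - K)).biUnion B, ⟨?_, ?_, ?_⟩, ?_⟩
  · intro v
    obtain ⟨i, hi⟩ := htime v
    refine ⟨i, Finset.mem_biUnion.2 ⟨v, (hact _ _).2 ?_, hself v⟩⟩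
    rw [hi]
    exact ⟨le_rfl, hI1 v (Finset.mem_univ _)⟩
  · have key : ∀ v w, G.Adj v w → ord v ≤ ord w → ∃ i : Fin (2 * K.toNat + 1),
        v ∈ (act ((i : ℕ) - K)).biUnion B ∧ w ∈ (act ((i : ℕ) - K)).biUnion B := by
      intro v w hvw ho
      obtain ⟨i, hi⟩ := htime w
      have hw : w ∈ act ((i : ℕ) - K) := by
        rw [hact, hi]
        exact ⟨le_rfl, hI1 w (Finset.mem_univ _)⟩
      exact ⟨i, Finset.mem_biUnion.2 ⟨w, hw, hG v w hvw ho⟩, Finset.mem_biUnion.2 ⟨w, hw, hself w⟩⟩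
    intro v w hvw
    rcases le_total (ord v) (ord w) with ho | ho
    · exact key v w hvw ho
    · obtain ⟨i, h1, h2⟩ := key w v hvw.symm ho
      exact ⟨i, h2, h1⟩
  · intro i j m hij hjm x hxi hxm
    by_contra hx
    have hno : ∀ v, x ∈ B v → ¬ (l v ≤ ((j : ℕ) : ℤ) - K ∧ ((j : ℕ) : ℤ) - K ≤ r v) :=
      fun v hv ha => hx (Finset.mem_biUnion.2 ⟨v, (hact _ _).2 ha, hv⟩)
    have side : ∀ n v, ord v = n → x ∈ B v →
        (r v < ((j : ℕ) : ℤ) - K ↔ r x < ((j : ℕ) : ℤ) - K) := by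
      intro n
      induction n using Nat.strong_induction_on with
      | _ n ih =>
        intro v hn hv
        by_cases hvx : v = x
        · rw [hvx]
        · have hvρ : v ≠ ρ := by
            rintro rfl
            exact hvx (hinj (le_antisymm (hρ x) (hle _ x hv)))
          have hxp := hBpar v hvρ x hv (Ne.symm hvx)
          rw [← ih _ (hn ▸ hpar v hvρ) (par v) rfl hxp]
          have a1 := hI2 v (Finset.mem_univ _) (par v) (Finset.mem_univ _) (hFadj v hvρ)
          have a2 := hI2 (par v) (Finset.mem_univ _) v (Finset.mem_univ _) (hFadj v hvρ).symm
          have n1 := hno v hv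
          have n2 := hno (par v) hxp
          omega
    obtain ⟨v, hv, hxv⟩ := Finset.mem_biUnion.1 hxi
    obtain ⟨w, hw, hxw⟩ := Finset.mem_biUnion.1 hxm
    have s1 := side _ v rfl hxv
    have s2 := side _ w rfl hxw
    have n1 := hno v hxv
    have n2 := hno w hxw
    rw [hact] at hv hw
    rw [Fin.lt_def] at hij hjm
    omega
  · intro i
    refine (Finset.card_biUnion_le_card_mul _ _ k (fun v _ => hcard v)).trans ?_
    exact Nat.mul_le_mul_right _ (hI3 _)

lemma range_bdd {V ι : Type} [Fintype V] (X : ι → Finset V) :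
    BddAbove (Set.range fun u => (X u).card) :=
  ⟨Fintype.card V, by rintro _ ⟨u, rfl⟩; exact Finset.card_le_univ _⟩

lemma trivial_treeDecomp {V : Type} [Fintype V] (G : SimpleGraph V) :
    IsTreeDecomp G (⊥ : SimpleGraph Unit) (fun _ => (Finset.univ : Finset V)) := by
  refine ⟨IsTree.of_subsingleton, fun v => ⟨(), by simp⟩, fun v w _ => ⟨(), by simp⟩, fun v => ?_⟩
  have : Nonempty {u : Unit | v ∈ (Finset.univ : Finset V)} := ⟨⟨(), by simp⟩⟩
  exact ⟨fun a b => by rw [Subsingleton.elim a b]⟩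

lemma trivial_pathDecomp {V : Type} [Fintype V] (G : SimpleGraph V) :
    IsPathDecomp G (fun _ : Fin 1 => (Finset.univ : Finset V)) :=
  ⟨fun v => ⟨0, by simp⟩, fun v w _ => ⟨0, by simp⟩, fun _ _ _ _ _ _ _ _ => by simp⟩

/-- For every finite simple graph `G`, `tw(G) ≤ pw(G)` and
`pw(G) ≤ (tw(G) + 1)·(log₃(2·|V(G)| + 1) + 1) − 1`. -/
theorem treewidth_le_pathwidth_and_pathwidth_le_log_bound
    {V : Type} [Fintype V] (G : SimpleGraph V) :
    treewidth G ≤ pathwidth G ∧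
    (pathwidth G : ℝ) ≤
      ((treewidth G : ℝ) + 1) * (Real.logb 3 (2 * (Fintype.card V : ℝ) + 1) + 1) - 1 := by
  have htw : treewidth G ∈ { k | ∃ (ι : Type) (T : SimpleGraph ι) (X : ι → Finset V),
      IsTreeDecomp G T X ∧ sSup (Set.range fun u => (X u).card) - 1 = k } :=
    Nat.sInf_mem ⟨_, Unit, ⊥, _, trivial_treeDecomp G, rfl⟩
  have hpw : pathwidth G ∈ { k | ∃ (r : ℕ) (X : Fin r → Finset V),
      IsPathDecomp G X ∧ sSup (Set.range fun i => (X i).card) - 1 = k } :=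
    Nat.sInf_mem ⟨_, 1, _, trivial_pathDecomp G, rfl⟩
  constructor
  · obtain ⟨r, X, hX, hk⟩ := hpw
    cases r with
    | zero =>
      have hV : IsEmpty V := ⟨fun v => (hX.1 v).choose.elim0⟩
      have : treewidth G ≤ 0 :=
        Nat.sInf_le ⟨Unit, ⊥, _, trivial_treeDecomp G, by simp⟩
      omega
    | succ n =>
      rw [← hk]
      exact Nat.sInf_le ⟨_, _, X, hX.toTree, rfl⟩
  · obtain ⟨ι, T, X, hX, hk⟩ := htw
    rcases isEmpty_or_nonempty V with hV | hV
    · have h0 : pathwidth G ≤ 0 :=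
        Nat.sInf_le ⟨1, _, trivial_pathDecomp G, by simp⟩
      have h0 : pathwidth G = 0 := by omega
      simp [h0]
    · have hbag : ∀ u, (X u).card ≤ treewidth G + 1 := by
        intro u
        have := le_csSup (range_bdd X) (Set.mem_range_self u)
        omega
      let s := Nat.log 3 (2 * Fintype.card V + 1)
      obtain ⟨n, Z, hZ, hcard⟩ := pathDecomp_exists hX (treewidth G + 1) s hbag
        (Nat.lt_pow_succ_log_self (by norm_num) _)
      have hsup : sSup (Set.range fun i => (Z i).card) ≤ (s + 1) * (treewidth G + 1) := by
        apply csSup_le'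
        rintro _ ⟨i, rfl⟩
        exact hcard i
      have hle : pathwidth G ≤ sSup (Set.range fun i => (Z i).card) - 1 :=
        Nat.sInf_le ⟨n, Z, hZ, rfl⟩
      have hpos : 0 < (s + 1) * (treewidth G + 1) := by positivity
      have hfin : pathwidth G + 1 ≤ (s + 1) * (treewidth G + 1) := by omega
      have hfin' : (pathwidth G : ℝ) + 1 ≤ ((s : ℝ) + 1) * ((treewidth G : ℝ) + 1) := by
        exact_mod_cast hfin
      have hlog : (s : ℝ) ≤ Real.logb 3 (2 * (Fintype.card V : ℝ) + 1) := by
        have := Real.natLog_le_logb (2 * Fintype.card V + 1) 3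
        push_cast at this
        exact this
      have : ((s : ℝ) + 1) * ((treewidth G : ℝ) + 1) ≤
          (Real.logb 3 (2 * (Fintype.card V : ℝ) + 1) + 1) * ((treewidth G : ℝ) + 1) := by
        gcongr
      linarith
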